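/- Let ζ ∈ (-1/2, ∞) and α ∈ (0,2]. Then there exist constants c > 0 and K > 0 (depending only on ζ and α) such that for all r, s, z, t > 0 with |z - s| > |r - s|/2: p_ζ^{(α)}(t,z,s) ≤ K · p_ζ^{(α)}(t, c r, c s). -/

import Mathlib

open MeasureTheory Real Set Filter

/-- Modified Bessel function of the first kind of order `ν`. -/
noncomputable def besselI (ν x : ℝ) : ℝ :=
  ∑' k : ℕ, (x / 2) ^ (2 * (k : ℝ) + ν) / ((Nat.factorial k : ℝ) * Real.Gamma ((k : ℝ) + ν + 1))

/-- The Bessel heat kernel `p_ζ^{(2)}(t,r,s)`. -/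
noncomputable def besselHeat (ζ t r s : ℝ) : ℝ :=
  (r * s) ^ ((1 : ℝ) / 2 - ζ) / (2 * t) * Real.exp (-(r ^ 2 + s ^ 2) / (4 * t)) *
    besselI (ζ - 1 / 2) (r * s / (2 * t))

/-- `σ` is a family of `α/2`-stable subordinator densities. -/
def IsStableSubordinatorDensity (α : ℝ) (σ : ℝ → ℝ → ℝ) : Prop :=
  (∀ t, 0 < t → ∀ τ, 0 < τ → 0 ≤ σ t τ) ∧
  (∀ t, 0 < t → Measurable (σ t)) ∧
  (∀ t l : ℝ, 0 < t → 0 ≤ l →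
    (∫ τ in Ioi (0 : ℝ), Real.exp (-τ * l) * σ t τ) = Real.exp (-t * l ^ (α / 2)))

/-- The `α/2`-subordinated Bessel heat kernel `p_ζ^{(α)}(t,r,s)`. -/
noncomputable def subKernel (ζ : ℝ) (σ : ℝ → ℝ → ℝ) (t r s : ℝ) : ℝ :=
  ∫ τ in Ioi (0 : ℝ), besselHeat ζ τ r s * σ t τ

/-- `p` is the kernel `p_ζ^{(α)}` for `α ∈ (0,2]`: the Bessel heat kernel itself when `α = 2`,
and the `α/2`-subordinated kernel when `α < 2`. -/
def IsSubordinatedBesselKernel (ζ α : ℝ) (p : ℝ → ℝ → ℝ → ℝ) : Prop :=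
  (α = 2 ∧ ∀ t r s : ℝ, p t r s = besselHeat ζ t r s) ∨
  (α < 2 ∧ ∃ σ : ℝ → ℝ → ℝ, IsStableSubordinatorDensity α σ ∧
    ∀ t r s : ℝ, p t r s = subKernel ζ σ t r s)

/-- A positive sequence converging to a positive limit is bounded above and away from zero. -/
lemma exists_bounds_of_tendsto_pos {a : ℕ → ℝ} {L : ℝ} (ha : ∀ n, 0 < a n) (hL : 0 < L)
    (h : Tendsto a atTop (nhds L)) : ∃ m M : ℝ, 0 < m ∧ 0 < M ∧ ∀ n, m ≤ a n ∧ a n ≤ M := by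
  obtain ⟨M, hM⟩ := h.bddAbove_range
  obtain ⟨M', hM'⟩ := (h.inv₀ hL.ne').bddAbove_range
  have h1 : ∀ n, a n ≤ M := fun n => hM ⟨n, rfl⟩
  have h2 : ∀ n, (a n)⁻¹ ≤ M' := fun n => hM' ⟨n, rfl⟩
  have hM'0 : 0 < M' := (inv_pos.2 (ha 0)).trans_le (h2 0)
  exact ⟨M'⁻¹, M, inv_pos.2 hM'0, (ha 0).trans_le (h1 0),
    fun n => ⟨inv_le_of_inv_le₀ (ha n) (h2 n), h1 n⟩⟩

lemma prod_range_mul_Gamma {s : ℝ} (hs : 0 < s) (n : ℕ) :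
    (∏ j ∈ Finset.range n, (s + j)) * Real.Gamma s = Real.Gamma (s + n) := by
  induction n with
  | zero => simp
  | succ n ih =>
    rw [Finset.prod_range_succ, Nat.cast_succ, ← add_assoc,
      Real.Gamma_add_one (by positivity : s + (n : ℝ) ≠ 0), ← ih]
    ring

/-- Two-sided power bounds for `Γ(k + s) / k!`. -/
lemma exists_Gamma_nat_add_bounds {s : ℝ} (hs : 0 < s) :
    ∃ m M : ℝ, 0 < m ∧ 0 < M ∧ ∀ k : ℕ,
      m * (((k : ℝ) + 1) ^ (s - 1) * k.factorial) ≤ Real.Gamma (k + s) ∧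
      Real.Gamma (k + s) ≤ M * (((k : ℝ) + 1) ^ (s - 1) * k.factorial) := by
  have hG := Real.Gamma_pos_of_pos hs
  have hpos : ∀ n, 0 < Real.GammaSeq s (n + 1) := fun n => by
    unfold Real.GammaSeq
    have : 0 < ∏ j ∈ Finset.range (n + 1 + 1), (s + j) :=
      Finset.prod_pos fun j _ => by positivity
    positivity
  obtain ⟨m, M, hm, hM, hb⟩ := exists_bounds_of_tendsto_pos hpos hG
    ((tendsto_add_atTop_iff_nat 1).2 (Real.GammaSeq_tendsto_Gamma s))
  have key : ∀ k : ℕ, Real.Gamma (k + s) * (Real.GammaSeq s (k + 1) * ((k + s) * (k + s + 1))) =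
      Real.Gamma s * (((k : ℝ) + 1) ^ 2 * (((k : ℝ) + 1) ^ (s - 1) * k.factorial)) := fun k => by
    have hP : 0 < ∏ j ∈ Finset.range (k + 1 + 1), (s + j) :=
      Finset.prod_pos fun j _ => by positivity
    have hk : (0 : ℝ) < k + s := by positivity
    have h1 := prod_range_mul_Gamma hs (k + 1 + 1)
    have h2 : Real.Gamma (s + ((k + 1 + 1 : ℕ) : ℝ)) = (k + s + 1) * ((k + s) * Real.Gamma (k + s)) := by
      rw [← Real.Gamma_add_one hk.ne', ← Real.Gamma_add_one (by positivity)]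
      push_cast; ring_nf
    have h3 : ((k : ℝ) + 1) ^ s = ((k : ℝ) + 1) ^ (s - 1) * (k + 1) := by
      rw [← Real.rpow_add_one (by positivity)]; ring_nf
    unfold Real.GammaSeq
    rw [h2] at h1
    rw [Nat.factorial_succ]
    push_cast
    rw [h3]
    field_simp
    linear_combination -h1
  refine ⟨Real.Gamma s / (M * ((1 + s) * (1 + s))), Real.Gamma s * (1 + 1 / s) / m, by positivity,
    by positivity, fun k => ?_⟩
  set Y := ((k : ℝ) + 1) ^ (s - 1) * k.factorial with hY
  have hY0 : 0 < Y := by positivity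
  have hk : (0 : ℝ) < k + s := by positivity
  have hk0 : (0 : ℝ) ≤ k := by positivity
  have hGk := Real.Gamma_pos_of_pos hk
  obtain ⟨hb1, hb2⟩ := hb k
  have e := key k
  constructor
  · rw [div_mul_eq_mul_div, div_le_iff₀ (by positivity)]
    have h1 : ((k : ℝ) + s) * (k + s + 1) ≤ ((1 + s) * (1 + s)) * ((k : ℝ) + 1) ^ 2 := by
      nlinarith [mul_nonneg hk0 hs.le, mul_nonneg hk0 hk0, mul_nonneg (mul_nonneg hk0 hs.le) hk0,
        mul_nonneg (mul_nonneg hk0 hs.le) (mul_nonneg hk0 hs.le),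
        mul_nonneg (mul_nonneg hk0 hs.le) hs.le]
    have h2 : Real.Gamma (k + s) * (Real.GammaSeq s (k + 1) * ((k + s) * (k + s + 1))) ≤
        Real.Gamma (k + s) * (M * (((1 + s) * (1 + s)) * ((k : ℝ) + 1) ^ 2)) := by
      gcongr
    rw [e] at h2
    have h3 : (0 : ℝ) < ((k : ℝ) + 1) ^ 2 := by positivity
    refine le_of_mul_le_mul_right ?_ h3
    linarith
  · rw [div_mul_eq_mul_div, le_div_iff₀ hm]
    have h1 : ((k : ℝ) + 1) ^ 2 ≤ (1 + 1 / s) * (((k : ℝ) + s) * (k + s + 1)) := by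
      have : (1 + 1 / s) * (((k : ℝ) + s) * (k + s + 1)) - ((k : ℝ) + 1) ^ 2 =
        2 * k * s + (2 * s + s * s) + (k * k + k) / s + k := by field_simp; ring
      have : 0 ≤ 2 * k * s + (2 * s + s * s) + (k * k + k) / s + k := by positivity
      linarith
    have h2 : Real.Gamma (k + s) * (m * ((k + s) * (k + s + 1))) ≤
        Real.Gamma (k + s) * (Real.GammaSeq s (k + 1) * ((k + s) * (k + s + 1))) := by
      gcongr
    have h4 : Real.Gamma s * (((k : ℝ) + 1) ^ 2 * Y) ≤
       Real.Gamma s * ((1 + 1 / s) * (((k : ℝ) + s) * (k + s + 1)) * Y) := by gcongr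
    have h3 : (0 : ℝ) < ((k : ℝ) + s) * (k + s + 1) := by positivity
    refine le_of_mul_le_mul_right ?_ h3
    linarith

/-- The Taylor coefficients of `I_{ζ-1/2}` are comparable with `(k+1)^{-ζ} / (2k)!`. -/
lemma exists_besselCoeff_bounds {ζ : ℝ} (hζ : -1 / 2 < ζ) :
    ∃ m M : ℝ, 0 < m ∧ 0 < M ∧ ∀ k : ℕ,
      m * (((k : ℝ) + 1) ^ (-ζ) / (2 * k).factorial) ≤
        1 / (4 ^ k * (k.factorial * Real.Gamma (k + (ζ - 1 / 2) + 1))) ∧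
      1 / (4 ^ k * (k.factorial * Real.Gamma (k + (ζ - 1 / 2) + 1))) ≤
        M * (((k : ℝ) + 1) ^ (-ζ) / (2 * k).factorial) := by
  obtain ⟨m, M, hm, hM, h⟩ := exists_Gamma_nat_add_bounds (s := ζ + 1 / 2) (by linarith)
  obtain ⟨m', M', hm', hM', h'⟩ := exists_Gamma_nat_add_bounds (s := 1 / 2) (by norm_num)
  have hpi : 0 < √π := Real.sqrt_pos.2 Real.pi_pos
  refine ⟨m' / (M * √π), M' / (m * √π), by positivity, by positivity, fun k => ?_⟩
  obtain ⟨h1, h2⟩ := h k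
  obtain ⟨h1', h2'⟩ := h' k
  have hd : 4 ^ k * (k.factorial * Real.Gamma (k + 1 / 2)) = (2 * k).factorial * √π := by
    have := Real.Gamma_mul_Gamma_add_half ((k : ℝ) + 1 / 2)
    rw [show (k : ℝ) + 1 / 2 + 1 / 2 = k + 1 by ring, Real.Gamma_nat_eq_factorial,
      show 2 * ((k : ℝ) + 1 / 2) = ((2 * k : ℕ) : ℝ) + 1 by push_cast; ring,
      Real.Gamma_nat_eq_factorial,
      show (1 : ℝ) - (((2 * k : ℕ) : ℝ) + 1) = -((2 * k : ℕ) : ℝ) by ring, Real.rpow_neg (by norm_num),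
      Real.rpow_natCast, pow_mul] at this
    have h4 : ((2 : ℝ) ^ 2) ^ k = 4 ^ k := by norm_num
    rw [h4] at this
    have h5 : (0 : ℝ) < 4 ^ k := by positivity
    rw [mul_comm (k.factorial : ℝ), this]
    field_simp
  have e1 : (k : ℝ) + (ζ - 1 / 2) + 1 = k + (ζ + 1 / 2) := by ring
  rw [e1]
  set g := Real.Gamma ((k : ℝ) + (ζ + 1 / 2)) with hg
  set g' := Real.Gamma ((k : ℝ) + 1 / 2) with hg'
  have hg0 : 0 < g := Real.Gamma_pos_of_pos (by have : (0 : ℝ) ≤ k := by positivity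
                                                linarith)
  have hg'0 : 0 < g' := Real.Gamma_pos_of_pos (by positivity)
  set X := ((k : ℝ) + 1) with hX
  have hX0 : 0 < X := by positivity
  have e2 : X ^ (ζ + 1 / 2 - 1) = X ^ ζ * X ^ ((1 : ℝ) / 2 - 1) := by
    rw [← Real.rpow_add hX0]; ring_nf
  have hf : ((2 * k).factorial : ℝ) = 4 ^ k * (k.factorial * g') / √π := by
    rw [hd]; field_simp
  rw [e2] at h1 h2
  rw [hf, Real.rpow_neg hX0.le]
  set A := X ^ ζ
  set B := X ^ ((1 : ℝ) / 2 - 1)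
  have hA : 0 < A := by positivity
  have hB : 0 < B := by positivity
  have hk : (0 : ℝ) < k.factorial := by positivity
  have h4 : (0 : ℝ) < 4 ^ k := by positivity
  constructor
  · have : m' / (M * √π) * (A⁻¹ / (4 ^ k * (k.factorial * g') / √π)) =
      m' / (M * A * (4 ^ k * (k.factorial * g'))) := by field_simp
    rw [this, div_le_div_iff₀ (by positivity) (by positivity)]
    have : m' * g ≤ M * A * g' := by
      calc m' * g ≤ m' * (M * (A * B * k.factorial)) := by gcongr
        _ = M * A * (m' * (B * k.factorial)) := by ring
        _ ≤ _ := by gcongr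
    nlinarith [mul_le_mul_of_nonneg_left this (mul_pos h4 hk).le]
  · have : M' / (m * √π) * (A⁻¹ / (4 ^ k * (k.factorial * g') / √π)) =
      M' / (m * A * (4 ^ k * (k.factorial * g'))) := by field_simp
    rw [this, div_le_div_iff₀ (by positivity) (by positivity)]
    have : m * A * g' ≤ M' * g := by
      calc m * A * g' ≤ m * A * (M' * (B * k.factorial)) := by gcongr
        _ = M' * (m * (A * B * k.factorial)) := by ring
        _ ≤ _ := by gcongr
    nlinarith [mul_le_mul_of_nonneg_left this (mul_pos h4 hk).le]

lemma hasSum_exp_real (x : ℝ) : HasSum (fun n : ℕ => x ^ n / n.factorial) (Real.exp x) := by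
  rw [Real.exp_eq_exp_ℝ]
  exact NormedSpace.expSeries_div_hasSum_exp x

lemma hasSum_nat_add_one_mul_exp (x : ℝ) :
    HasSum (fun n : ℕ => ((n : ℝ) + 1) * (x ^ n / n.factorial)) ((1 + x) * Real.exp x) := by
  have h1 : HasSum (fun n : ℕ => (n : ℝ) * (x ^ n / n.factorial)) (x * Real.exp x) := by
    rw [← hasSum_nat_add_iff' 1]
    simp only [Finset.range_one, Finset.sum_singleton, Nat.cast_zero, zero_mul, sub_zero]
    refine ((hasSum_exp_real x).mul_left x).congr_fun fun n => ?_
    rw [Nat.factorial_succ]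
    push_cast
    field_simp
    ring
  convert (hasSum_exp_real x).add h1 using 1
  · ext n; ring
  · ring

/-- A nonnegative series dominated termwise by a shifted even subseries of `b`. -/
lemma summable_and_tsum_le_of_le_even {a b : ℕ → ℝ} {S : ℝ} (n : ℕ) (ha : ∀ k, 0 ≤ a k)
    (hb : ∀ k, 0 ≤ b k) (hS : HasSum b S) (h : ∀ k, a k ≤ b (2 * k + n)) :
    Summable a ∧ ∑' k, a k ≤ S := by
  have hi : Function.Injective fun k : ℕ => 2 * k + n := fun i j hij => by
    simp only at hij; omega
  have hs : Summable fun k => b (2 * k + n) := hS.summable.comp_injective hi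
  have hsa := Summable.of_nonneg_of_le ha h hs
  refine ⟨hsa, (hsa.tsum_le_tsum h hs).trans ?_⟩
  rw [← hS.tsum_eq]
  exact tsum_comp_le_tsum_of_inj hS.summable hb hi

lemma factorial_two_mul_add_le (k n : ℕ) :
    ((2 * k + n).factorial : ℝ) ≤ (2 * k).factorial * ((n + 2) ^ n * (k + 1) ^ n) := by
  have h1 : (2 * k + n).factorial ≤ (2 * k).factorial * (2 * k + n) ^ n := by
    rw [← Nat.factorial_mul_ascFactorial]
    exact Nat.mul_le_mul_left _ (Nat.ascFactorial_le_pow_add _ _)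
  have h2 : (2 * k + n) ^ n ≤ (n + 2) ^ n * (k + 1) ^ n := by
    rw [← mul_pow]
    exact Nat.pow_le_pow_left (by nlinarith) _
  exact_mod_cast h1.trans (Nat.mul_le_mul_left _ h2)

lemma exists_tsum_inv_pow_le (n : ℕ) : ∃ C : ℝ, 0 < C ∧ ∀ x : ℝ, 0 ≤ x →
    Summable (fun k : ℕ => x ^ (2 * k) / (2 * k).factorial * ((1 + x) / (k + 1)) ^ n) ∧
    ∑' k : ℕ, x ^ (2 * k) / (2 * k).factorial * ((1 + x) / (k + 1)) ^ n ≤ C * Real.exp x := by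
  refine ⟨2 ^ n * (1 + (n + 2) ^ n), by positivity, fun x hx => ?_⟩
  obtain ⟨s0, t0⟩ := summable_and_tsum_le_of_le_even
    (a := fun k : ℕ => x ^ (2 * k) / (2 * k).factorial) 0 (fun k => by positivity)
    (fun k => by positivity) (hasSum_exp_real x) (fun k => le_rfl)
  obtain ⟨s1, t1⟩ := summable_and_tsum_le_of_le_even
    (a := fun k : ℕ => x ^ (2 * k + n) / (2 * k + n).factorial) n (fun k => by positivity)
    (fun k => by positivity) (hasSum_exp_real x) (fun k => le_rfl)
  have hle : ∀ k : ℕ, x ^ (2 * k) / (2 * k).factorial * ((1 + x) / (k + 1)) ^ n ≤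
      2 ^ n * (x ^ (2 * k) / (2 * k).factorial) +
        2 ^ n * (n + 2) ^ n * (x ^ (2 * k + n) / (2 * k + n).factorial) := fun k => by
    have h1 : (1 + x) ^ n ≤ 2 ^ n * (1 + x ^ n) := by
      refine (add_pow_le zero_le_one hx n).trans ?_
      rw [one_pow]
      gcongr
      · norm_num
      · omega
    have h2 : 1 / ((2 * k).factorial * ((k : ℝ) + 1) ^ n) ≤
        (n + 2) ^ n / (2 * k + n).factorial := by
      rw [div_le_div_iff₀ (by positivity) (by positivity)]
      have := factorial_two_mul_add_le k n
      linarith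
    have h3 : 1 / ((2 * k).factorial * ((k : ℝ) + 1) ^ n) ≤ 1 / (2 * k).factorial := by
      refine one_div_le_one_div_of_le (by positivity) (le_mul_of_one_le_right (by positivity) ?_)
      exact one_le_pow₀ (by linarith [(Nat.cast_nonneg k : (0 : ℝ) ≤ k)])
    calc x ^ (2 * k) / (2 * k).factorial * ((1 + x) / (k + 1)) ^ n
        = x ^ (2 * k) * (1 / ((2 * k).factorial * ((k : ℝ) + 1) ^ n)) * (1 + x) ^ n := by
          rw [div_pow]; field_simp
      _ ≤ x ^ (2 * k) * (1 / ((2 * k).factorial * ((k : ℝ) + 1) ^ n)) * (2 ^ n * (1 + x ^ n)) := by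
          gcongr
      _ = 2 ^ n * (x ^ (2 * k) * (1 / ((2 * k).factorial * ((k : ℝ) + 1) ^ n))) +
          2 ^ n * (x ^ (2 * k + n) * (1 / ((2 * k).factorial * ((k : ℝ) + 1) ^ n))) := by ring
      _ ≤ 2 ^ n * (x ^ (2 * k) * (1 / (2 * k).factorial)) +
          2 ^ n * (x ^ (2 * k + n) * ((n + 2) ^ n / (2 * k + n).factorial)) := by gcongr
      _ = _ := by ring
  have s2 := (s0.mul_left (2 ^ n)).add (s1.mul_left (2 ^ n * ((n : ℝ) + 2) ^ n))
  have s3 := Summable.of_nonneg_of_le (fun k : ℕ => by positivity) hle s2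
  refine ⟨s3, (s3.tsum_le_tsum hle s2).trans ?_⟩
  rw [(s0.mul_left (2 ^ n)).tsum_add (s1.mul_left (2 ^ n * ((n : ℝ) + 2) ^ n)), tsum_mul_left,
    tsum_mul_left]
  calc _ ≤ 2 ^ n * Real.exp x + 2 ^ n * (n + 2) ^ n * Real.exp x := by gcongr
    _ = _ := by ring

lemma tsum_mul_nat_add_one_div_le {x : ℝ} (hx : 0 ≤ x) :
    Summable (fun k : ℕ => x ^ (2 * k) / (2 * k).factorial * ((k + 1) / (1 + x))) ∧
    ∑' k : ℕ, x ^ (2 * k) / (2 * k).factorial * ((k + 1) / (1 + x)) ≤ Real.exp x := by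
  refine summable_and_tsum_le_of_le_even
    (b := fun n : ℕ => (1 + x)⁻¹ * (((n : ℝ) + 1) * (x ^ n / n.factorial))) 0
    (fun k => by positivity) (fun k => by positivity) ?_ (fun k => ?_)
  · have := (hasSum_nat_add_one_mul_exp x).mul_left (1 + x)⁻¹
    rwa [inv_mul_cancel_left₀ (by positivity : 1 + x ≠ 0)] at this
  · simp only [add_zero]
    rw [show x ^ (2 * k) / (2 * k).factorial * (((k : ℝ) + 1) / (1 + x)) =
      (1 + x)⁻¹ * ((k + 1) * (x ^ (2 * k) / (2 * k).factorial)) by ring]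
    push_cast
    gcongr
    linarith [(Nat.cast_nonneg k : (0 : ℝ) ≤ k)]

lemma rpow_neg_le_one_add_add {ζ u : ℝ} (hζ : -1 / 2 < ζ) (hu : 0 < u) {n : ℕ} (hn : ζ ≤ n) :
    u ^ (-ζ) ≤ 1 + u + (1 / u) ^ n := by
  have hp : 0 < (1 / u) ^ n := by positivity
  rcases le_total 1 u with h | h
  · have : u ^ (-ζ) ≤ u ^ (1 : ℝ) := Real.rpow_le_rpow_of_exponent_le h (by linarith)
    rw [Real.rpow_one] at this
    linarith
  · have : u ^ (-ζ) ≤ u ^ (-(n : ℝ)) := Real.rpow_le_rpow_of_exponent_ge hu h (by linarith)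
    rw [Real.rpow_neg hu.le (n : ℝ), Real.rpow_natCast, ← inv_pow, ← one_div] at this
    linarith

lemma le_rpow_neg {u L : ℝ} (ζ : ℝ) (hu : 0 < u) (hL : 1 ≤ L) :
    L ^ (-|ζ|) * (1 - (u + 1 / u) / L) ≤ u ^ (-ζ) := by
  have hL0 : 0 < L := by linarith
  have hu' : 0 < 1 / u := by positivity
  by_cases h : u ≤ L ∧ 1 / u ≤ L
  · have h1 : L ^ (-|ζ|) * (1 - (u + 1 / u) / L) ≤ L ^ (-|ζ|) :=
      mul_le_of_le_one_right (by positivity) (by linarith [div_pos (add_pos hu hu') hL0])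
    refine h1.trans ?_
    rw [Real.rpow_neg hL0.le, Real.rpow_neg hu.le]
    refine inv_anti₀ (by positivity) ?_
    rcases le_total 0 ζ with hz | hz
    · rw [abs_of_nonneg hz]
      exact Real.rpow_le_rpow hu.le h.1 hz
    · rw [abs_of_nonpos hz]
      have := Real.rpow_le_rpow hu'.le h.2 (neg_nonneg.2 hz)
      rwa [one_div, Real.inv_rpow hu.le, Real.rpow_neg hu.le, inv_inv] at this
  · have h1 : 1 ≤ (u + 1 / u) / L := by
      rw [one_le_div hL0]
      by_contra hc
      exact h ⟨by linarith, by linarith⟩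
    have : L ^ (-|ζ|) * (1 - (u + 1 / u) / L) ≤ 0 :=
      mul_nonpos_of_nonneg_of_nonpos (by positivity) (by linarith)
    exact this.trans (by positivity)

/-- Two-sided bounds for `∑ (k+1)^{-ζ} x^{2k} / (2k)!`. -/
lemma exists_tsum_rpow_bounds {ζ : ℝ} (hζ : -1 / 2 < ζ) :
    ∃ m M : ℝ, 0 < m ∧ 0 < M ∧ ∀ x : ℝ, 0 ≤ x →
      Summable (fun k : ℕ => x ^ (2 * k) / (2 * k).factorial * ((k : ℝ) + 1) ^ (-ζ)) ∧
      m * ((1 + x) ^ (-ζ) * Real.exp x) ≤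
        ∑' k : ℕ, x ^ (2 * k) / (2 * k).factorial * ((k : ℝ) + 1) ^ (-ζ) ∧
      ∑' k : ℕ, x ^ (2 * k) / (2 * k).factorial * ((k : ℝ) + 1) ^ (-ζ) ≤
        M * ((1 + x) ^ (-ζ) * Real.exp x) := by
  obtain ⟨n, hn⟩ := exists_nat_ge ζ
  obtain ⟨C, hC, hCb⟩ := exists_tsum_inv_pow_le n
  obtain ⟨C₁, hC₁, hC₁b⟩ := exists_tsum_inv_pow_le 1
  set L := 4 * (1 + C₁) with hL
  have hL1 : 1 ≤ L := by linarith
  have hL0 : 0 < L := by linarith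
  refine ⟨L ^ (-|ζ|) / 4, 1 + 1 + C, by positivity, by positivity, fun x hx => ?_⟩
  obtain ⟨sC, tC⟩ := hCb x hx
  obtain ⟨sC₁, tC₁⟩ := hC₁b x hx
  obtain ⟨sU, tU⟩ := tsum_mul_nat_add_one_div_le hx
  have hcosh := Real.hasSum_cosh x
  have hcosh1 : Real.exp x / 2 ≤ Real.cosh x := by
    rw [Real.cosh_eq]; linarith [Real.exp_pos (-x)]
  have hcosh2 : Real.cosh x ≤ Real.exp x := by
    rw [Real.cosh_eq]; linarith [Real.exp_le_exp.2 (by linarith : -x ≤ x)]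
  have hterm : ∀ k : ℕ, x ^ (2 * k) / (2 * k).factorial * ((k : ℝ) + 1) ^ (-ζ) =
      (1 + x) ^ (-ζ) * (x ^ (2 * k) / (2 * k).factorial * (((k : ℝ) + 1) / (1 + x)) ^ (-ζ)) := by
    intro k
    rw [Real.div_rpow (by positivity) (by positivity)]
    field_simp
  have hinv : ∀ k : ℕ, 1 / (((k : ℝ) + 1) / (1 + x)) = (1 + x) / (k + 1) := fun k => one_div_div _ _
  have hup : ∀ k : ℕ, x ^ (2 * k) / (2 * k).factorial * (((k : ℝ) + 1) / (1 + x)) ^ (-ζ) ≤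
      x ^ (2 * k) / (2 * k).factorial + x ^ (2 * k) / (2 * k).factorial * ((k + 1) / (1 + x)) +
      x ^ (2 * k) / (2 * k).factorial * ((1 + x) / (k + 1)) ^ n := fun k => by
    have := rpow_neg_le_one_add_add hζ (u := ((k : ℝ) + 1) / (1 + x)) (by positivity) hn
    rw [hinv] at this
    calc _ ≤ x ^ (2 * k) / (2 * k).factorial *
          (1 + ((k : ℝ) + 1) / (1 + x) + ((1 + x) / (k + 1)) ^ n) := by gcongr
      _ = _ := by ring
  have hlow : ∀ k : ℕ, L ^ (-|ζ|) * (x ^ (2 * k) / (2 * k).factorial -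
      (x ^ (2 * k) / (2 * k).factorial * ((k + 1) / (1 + x)) +
      x ^ (2 * k) / (2 * k).factorial * ((1 + x) / (k + 1)) ^ 1) / L) ≤
      x ^ (2 * k) / (2 * k).factorial * (((k : ℝ) + 1) / (1 + x)) ^ (-ζ) := fun k => by
    have := le_rpow_neg ζ (u := ((k : ℝ) + 1) / (1 + x)) (by positivity) hL1
    rw [hinv] at this
    calc _ = x ^ (2 * k) / (2 * k).factorial * (L ^ (-|ζ|) * (1 - (((k : ℝ) + 1) / (1 + x) +
          (1 + x) / (k + 1)) / L)) := by ring
      _ ≤ _ := by gcongr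
  have hs1 := (hcosh.add sU.hasSum).add sC.hasSum
  have hs2 := ((hcosh.sub ((sU.hasSum.add sC₁.hasSum).div_const L)).mul_left (L ^ (-|ζ|)))
  have hs := Summable.of_nonneg_of_le (fun k : ℕ => by positivity) hup hs1.summable
  have b1 := hasSum_le hup hs.hasSum hs1
  have b2 := hasSum_le hlow hs2 hs.hasSum
  simp only [hterm]
  rw [tsum_mul_left]
  refine ⟨hs.mul_left _, ?_, ?_⟩
  · rw [mul_left_comm]
    gcongr
    refine le_trans ?_ b2
    rw [div_mul_eq_mul_div, mul_div_assoc]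
    gcongr
    have : (∑' k : ℕ, x ^ (2 * k) / (2 * k).factorial * (((k : ℝ) + 1) / (1 + x)) +
      ∑' k : ℕ, x ^ (2 * k) / (2 * k).factorial * ((1 + x) / ((k : ℝ) + 1)) ^ 1) / L
        ≤ Real.exp x / 4 := by
      rw [div_le_iff₀ hL0, hL]
      linarith
    linarith
  · rw [mul_left_comm]
    gcongr
    linarith

/-- Two-sided bounds for the modified Bessel function `I_{ζ-1/2}`. -/
lemma exists_besselI_bounds {ζ : ℝ} (hζ : -1 / 2 < ζ) :
    ∃ m M : ℝ, 0 < m ∧ 0 < M ∧ ∀ x : ℝ, 0 < x →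
      m * ((x / 2) ^ (ζ - 1 / 2) * ((1 + x) ^ (-ζ) * Real.exp x)) ≤ besselI (ζ - 1 / 2) x ∧
      besselI (ζ - 1 / 2) x ≤ M * ((x / 2) ^ (ζ - 1 / 2) * ((1 + x) ^ (-ζ) * Real.exp x)) := by
  obtain ⟨m, M, hm, hM, h⟩ := exists_besselCoeff_bounds hζ
  obtain ⟨m', M', hm', hM', h'⟩ := exists_tsum_rpow_bounds hζ
  refine ⟨m * m', M * M', by positivity, by positivity, fun x hx => ?_⟩
  obtain ⟨hs, hl, hu⟩ := h' x hx.le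
  have hI : besselI (ζ - 1 / 2) x = (x / 2) ^ (ζ - 1 / 2) * ∑' k : ℕ,
      x ^ (2 * k) * (1 / (4 ^ k * (k.factorial * Real.Gamma (k + (ζ - 1 / 2) + 1)))) := by
    unfold besselI
    rw [← tsum_mul_left]
    refine tsum_congr fun k => ?_
    have h4 : ((2 : ℝ)) ^ (2 * k) = 4 ^ k := by rw [pow_mul]; norm_num
    rw [Real.rpow_add (by positivity), show 2 * (k : ℝ) = ((2 * k : ℕ) : ℝ) by push_cast; ring,
      Real.rpow_natCast, div_pow, h4]
    ring
  have hlow : ∀ k : ℕ, m * (x ^ (2 * k) / (2 * k).factorial * ((k : ℝ) + 1) ^ (-ζ)) ≤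
      x ^ (2 * k) * (1 / (4 ^ k * (k.factorial * Real.Gamma (k + (ζ - 1 / 2) + 1)))) := fun k => by
    calc _ = x ^ (2 * k) * (m * (((k : ℝ) + 1) ^ (-ζ) / (2 * k).factorial)) := by ring
      _ ≤ _ := mul_le_mul_of_nonneg_left (h k).1 (by positivity)
  have hup : ∀ k : ℕ,
      x ^ (2 * k) * (1 / (4 ^ k * (k.factorial * Real.Gamma (k + (ζ - 1 / 2) + 1)))) ≤
      M * (x ^ (2 * k) / (2 * k).factorial * ((k : ℝ) + 1) ^ (-ζ)) := fun k => by
    calc _ ≤ x ^ (2 * k) * (M * (((k : ℝ) + 1) ^ (-ζ) / (2 * k).factorial)) :=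
          mul_le_mul_of_nonneg_left (h k).2 (by positivity)
      _ = _ := by ring
  have hsum := Summable.of_nonneg_of_le
    (fun k : ℕ => le_trans (by positivity) (hlow k)) hup (hs.mul_left M)
  have b1 := hasSum_le hlow (hs.hasSum.mul_left m) hsum.hasSum
  have b2 := hasSum_le hup hsum.hasSum (hs.hasSum.mul_left M)
  rw [hI]
  constructor
  · rw [mul_left_comm]
    gcongr
    calc _ = m * (m' * ((1 + x) ^ (-ζ) * Real.exp x)) := by ring
      _ ≤ _ := by gcongr
      _ ≤ _ := b1
  · rw [mul_left_comm (M * M')]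
    gcongr
    calc _ ≤ _ := b2
      _ ≤ M * (M' * ((1 + x) ^ (-ζ) * Real.exp x)) := by gcongr
      _ = _ := by ring

/-- The elementary function comparable with the Bessel heat kernel. -/
noncomputable def heatProfile (ζ τ r s : ℝ) : ℝ :=
  τ ^ (-1 / 2 - ζ) * ((1 + r * s / (2 * τ)) ^ (-ζ) * Real.exp (-(r - s) ^ 2 / (4 * τ)))

lemma exists_besselHeat_bounds {ζ : ℝ} (hζ : -1 / 2 < ζ) :
    ∃ m M : ℝ, 0 < m ∧ 0 < M ∧ ∀ τ r s : ℝ, 0 < τ → 0 < r → 0 < s →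
      m * heatProfile ζ τ r s ≤ besselHeat ζ τ r s ∧
      besselHeat ζ τ r s ≤ M * heatProfile ζ τ r s := by
  obtain ⟨m, M, hm, hM, h⟩ := exists_besselI_bounds hζ
  refine ⟨4 ^ (1 / 2 - ζ) / 2 * m, 4 ^ (1 / 2 - ζ) / 2 * M, by positivity, by positivity,
    fun τ r s hτ hr hs => ?_⟩
  obtain ⟨h1, h2⟩ := h (r * s / (2 * τ)) (by positivity)
  have hrs : 0 < r * s := by positivity
  have e1 : (r * s) ^ ((1 : ℝ) / 2 - ζ) / (2 * τ) * (r * s / (2 * τ) / 2) ^ (ζ - 1 / 2) =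
      4 ^ (1 / 2 - ζ) / 2 * τ ^ (-1 / 2 - ζ) := by
    rw [show r * s / (2 * τ) / 2 = r * s / (4 * τ) by field_simp; norm_num,
      Real.div_rpow hrs.le (by positivity), Real.mul_rpow (by norm_num) hτ.le,
      show -1 / 2 - ζ = (1 / 2 - ζ) - 1 by ring, Real.rpow_sub_one hτ.ne',
      show ζ - 1 / 2 = -(1 / 2 - ζ) by ring, Real.rpow_neg hrs.le, Real.rpow_neg hτ.le,
      Real.rpow_neg (by norm_num : (0 : ℝ) ≤ 4)]
    have : 0 < (r * s) ^ (1 / 2 - ζ) := by positivity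
    have : 0 < τ ^ (1 / 2 - ζ) := by positivity
    have : (0 : ℝ) < 4 ^ (1 / 2 - ζ) := by positivity
    field_simp
  have e2 : Real.exp (-(r ^ 2 + s ^ 2) / (4 * τ)) * Real.exp (r * s / (2 * τ)) =
      Real.exp (-(r - s) ^ 2 / (4 * τ)) := by
    rw [← Real.exp_add]
    congr 1
    field_simp
    ring
  have e3 : ∀ A : ℝ, 4 ^ (1 / 2 - ζ) / 2 * A * heatProfile ζ τ r s =
      (r * s) ^ ((1 : ℝ) / 2 - ζ) / (2 * τ) * Real.exp (-(r ^ 2 + s ^ 2) / (4 * τ)) *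
      (A * ((r * s / (2 * τ) / 2) ^ (ζ - 1 / 2) * ((1 + r * s / (2 * τ)) ^ (-ζ) *
        Real.exp (r * s / (2 * τ))))) := fun A => by
    unfold heatProfile
    rw [← e2]
    linear_combination (-A * (1 + r * s / (2 * τ)) ^ (-ζ) *
      Real.exp (-(r ^ 2 + s ^ 2) / (4 * τ)) * Real.exp (r * s / (2 * τ))) * e1
  rw [e3, e3]
  unfold besselHeat
  exact ⟨by gcongr, by gcongr⟩

/-- If `P` and `Q` are positive and comparable up to the factor `C * (1 + D)`, then
`Q ^ (-ζ)` is at most `P ^ (-ζ)` times a power of this factor. -/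
lemma rpow_neg_le_of_comparable {P Q B ζ : ℝ} (hP : 0 < P) (hQ : 0 < Q) (hB : 0 < B)
    (hPQ : P ≤ B * Q) (hQP : Q ≤ B * P) : Q ^ (-ζ) ≤ B ^ |ζ| * P ^ (-ζ) := by
  rcases le_total 0 ζ with hz | hz
  · rw [abs_of_nonneg hz, Real.rpow_neg hQ.le, Real.rpow_neg hP.le, ← div_eq_mul_inv,
      le_div_iff₀ (by positivity), inv_mul_le_iff₀ (by positivity), mul_comm,
      ← Real.mul_rpow hB.le hQ.le]
    exact Real.rpow_le_rpow hP.le hPQ hz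
  · rw [abs_of_nonpos hz, ← Real.mul_rpow hB.le hP.le]
    exact Real.rpow_le_rpow hQ.le hQP (by linarith)

lemma mul_le_of_abs_sub_lt {r s z : ℝ} (hr : 0 < r) (hs : 0 < s) (hz : 0 < z)
    (h : |r - s| / 2 < |z - s|) :
    r * s ≤ 8 * (z * s + (z - s) ^ 2) ∧ z * s ≤ 64 * (r * s + (z - s) ^ 2) := by
  have h1 : (r - s) ^ 2 ≤ 4 * (z - s) ^ 2 := by
    rw [← sq_abs (r - s), ← sq_abs (z - s)]
    nlinarith [abs_nonneg (r - s)]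
  constructor
  · nlinarith [sq_nonneg (r - s), sq_nonneg (z - s), mul_pos hz hs, sq_nonneg (r - 2 * s),
      sq_nonneg (z - 2 * s), sq_nonneg (r - s - 4 * s)]
  · nlinarith [sq_nonneg (r - s), sq_nonneg (z - s), mul_pos hr hs, sq_nonneg (r - 2 * s),
      sq_nonneg (z - 2 * s), sq_nonneg (z - s - 4 * s)]

lemma exists_rpow_le_exp (a : ℝ) (ha : 0 ≤ a) :
    ∃ K : ℝ, 0 < K ∧ ∀ D : ℝ, 0 ≤ D → (1 + D) ^ a ≤ K * Real.exp (3 * D / 16) := by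
  set B := 1 + 6 * a with hB
  have hB1 : 1 ≤ B := by linarith
  have hB0 : 0 < B := by linarith
  refine ⟨B ^ a, by positivity, fun D hD => ?_⟩
  have h1 : 1 + D ≤ B * Real.exp (D / B) := by
    have h2 := Real.add_one_le_exp (D / B)
    calc 1 + D ≤ B * (D / B + 1) := by rw [mul_add, mul_div_cancel₀ _ hB0.ne']; linarith
      _ ≤ _ := by gcongr
  calc (1 + D) ^ a ≤ (B * Real.exp (D / B)) ^ a := Real.rpow_le_rpow (by positivity) h1 ha
    _ = B ^ a * Real.exp (D / B * a) := by
      rw [Real.mul_rpow hB0.le (Real.exp_pos _).le, ← Real.exp_mul]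
    _ ≤ _ := by
      gcongr
      rw [div_mul_eq_mul_div, div_le_div_iff₀ hB0 (by norm_num), hB]
      nlinarith [mul_nonneg hD ha]

lemma exists_heatProfile_le (ζ : ℝ) :
    ∃ K : ℝ, 0 < K ∧ ∀ τ r s z : ℝ, 0 < τ → 0 < r → 0 < s → 0 < z → |r - s| / 2 < |z - s| →
      heatProfile ζ τ z s ≤ K * heatProfile ζ τ (1 / 4 * r) (1 / 4 * s) := by
  obtain ⟨K, hK, hKD⟩ := exists_rpow_le_exp |ζ| (abs_nonneg _)
  refine ⟨1024 ^ |ζ| * K, by positivity, fun τ r s z hτ hr hs hz h => ?_⟩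
  obtain ⟨h1, h2⟩ := mul_le_of_abs_sub_lt hr hs hz h
  have h3 : (r - s) ^ 2 ≤ 4 * (z - s) ^ 2 := by
    rw [← sq_abs (r - s), ← sq_abs (z - s)]
    nlinarith [abs_nonneg (r - s)]
  set D := (z - s) ^ 2 / τ with hD
  have hD0 : 0 ≤ D := by positivity
  have hc := hKD D hD0
  set X := r * s / τ with hX
  set Y := z * s / τ with hY
  have hX0 : 0 < X := by positivity
  have hY0 : 0 < Y := by positivity
  have h1' : X ≤ 8 * (Y + D) := by
    rw [hX, hY, hD, ← add_div, ← mul_div_assoc]; gcongr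
  have h2' : Y ≤ 64 * (X + D) := by
    rw [hX, hY, hD, ← add_div, ← mul_div_assoc]; gcongr
  have eQ : z * s / (2 * τ) = Y / 2 := by rw [hY]; field_simp
  have eP : 1 / 4 * r * (1 / 4 * s) / (2 * τ) = X / 32 := by rw [hX]; field_simp; norm_num
  have eE : -(z - s) ^ 2 / (4 * τ) = -D / 4 := by rw [hD]; field_simp
  have hE : -D / 4 + 3 * D / 16 ≤ -(1 / 4 * r - 1 / 4 * s) ^ 2 / (4 * τ) := by
    have : (r - s) ^ 2 / τ ≤ 4 * D := by rw [hD, ← mul_div_assoc]; gcongr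
    rw [show -(1 / 4 * r - 1 / 4 * s) ^ 2 / (4 * τ) = -((r - s) ^ 2 / τ) / 64 by field_simp; ring]
    linarith
  have hpow : (1 + Y / 2) ^ (-ζ) ≤ (1024 * (1 + D)) ^ |ζ| * (1 + X / 32) ^ (-ζ) :=
    rpow_neg_le_of_comparable (by positivity) (by positivity) (by positivity)
      (by nlinarith [mul_nonneg hD0 hY0.le]) (by nlinarith [mul_nonneg hD0 hX0.le])
  unfold heatProfile
  rw [eQ, eP, eE, mul_left_comm (1024 ^ |ζ| * K)]
  refine mul_le_mul_of_nonneg_left ?_ (Real.rpow_nonneg hτ.le _)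
  rw [Real.mul_rpow (by norm_num) (by positivity)] at hpow
  calc (1 + Y / 2) ^ (-ζ) * Real.exp (-D / 4)
      ≤ 1024 ^ |ζ| * (1 + D) ^ |ζ| * (1 + X / 32) ^ (-ζ) * Real.exp (-D / 4) := by gcongr
    _ ≤ 1024 ^ |ζ| * (K * Real.exp (3 * D / 16)) * (1 + X / 32) ^ (-ζ) * Real.exp (-D / 4) := by
      gcongr
    _ = 1024 ^ |ζ| * K * ((1 + X / 32) ^ (-ζ) * Real.exp (-D / 4 + 3 * D / 16)) := by
      rw [Real.exp_add]; ring
    _ ≤ _ := by gcongr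

lemma aestronglyMeasurable_besselHeat {ζ r s : ℝ} (hζ : -1 / 2 < ζ) (hr : 0 < r) (hs : 0 < s) :
    AEStronglyMeasurable (fun τ => besselHeat ζ τ r s) (volume.restrict (Ioi 0)) := by
  set f : ℕ → ℝ → ℝ := fun k τ => (r * s / (2 * τ) / 2) ^ (2 * (k : ℝ) + (ζ - 1 / 2)) /
    ((Nat.factorial k : ℝ) * Real.Gamma ((k : ℝ) + (ζ - 1 / 2) + 1)) with hf
  have hfm : ∀ k, Measurable (f k) := fun k => by
    simp only [hf]
    fun_prop
  have hm : Measurable fun τ : ℝ => (r * s) ^ ((1 : ℝ) / 2 - ζ) / (2 * τ) *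
      Real.exp (-(r ^ 2 + s ^ 2) / (4 * τ)) * (∑' k, ENNReal.ofReal (f k τ)).toReal := by
    have : Measurable fun τ : ℝ => (∑' k, ENNReal.ofReal (f k τ)).toReal :=
      (Measurable.tsum fun k => (hfm k).ennreal_ofReal).ennreal_toReal
    fun_prop
  refine hm.aestronglyMeasurable.congr ?_
  filter_upwards [ae_restrict_mem measurableSet_Ioi] with τ hτ
  have hτ : 0 < τ := hτ
  have hnn : ∀ k, 0 ≤ f k τ := fun k => by
    have : 0 < Real.Gamma ((k : ℝ) + (ζ - 1 / 2) + 1) :=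
      Real.Gamma_pos_of_pos (by linarith [(Nat.cast_nonneg k : (0 : ℝ) ≤ k)])
    simp only [hf]
    positivity
  unfold besselHeat besselI
  rw [ENNReal.tsum_toReal_eq fun k => ENNReal.ofReal_ne_top]
  simp only [ENNReal.toReal_ofReal (hnn _)]
  rfl

lemma heatProfile_nonneg {ζ τ r s : ℝ} (hτ : 0 < τ) (hr : 0 < r) (hs : 0 < s) :
    0 ≤ heatProfile ζ τ r s := by
  unfold heatProfile
  positivity

lemma exists_heatProfile_le_one_add {ζ r s : ℝ} (hζ : -1 / 2 < ζ) (hr : 0 < r) (hs : 0 < s) :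
    ∃ C : ℝ, ∀ τ : ℝ, 0 < τ → heatProfile ζ τ r s ≤ C * (1 + τ ^ (-1 / 2 : ℝ)) := by
  set y := r * s / 2 with hy
  have hy0 : 0 < y := by positivity
  have key : ∀ τ : ℝ, 0 < τ → heatProfile ζ τ r s ≤ τ ^ (-1 / 2 : ℝ) * (τ + y) ^ (-ζ) := by
    intro τ hτ
    have h1 : Real.exp (-(r - s) ^ 2 / (4 * τ)) ≤ 1 := by
      rw [Real.exp_le_one_iff]
      exact div_nonpos_of_nonpos_of_nonneg (by nlinarith [sq_nonneg (r - s)]) (by positivity)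
    have h2 : 1 + r * s / (2 * τ) = (τ + y) / τ := by rw [hy]; field_simp
    unfold heatProfile
    rw [h2, Real.div_rpow (by positivity) hτ.le, sub_eq_add_neg, Real.rpow_add hτ]
    have h3 : 0 < τ ^ (-ζ) := by positivity
    calc _ = τ ^ (-1 / 2 : ℝ) * (τ + y) ^ (-ζ) * Real.exp (-(r - s) ^ 2 / (4 * τ)) := by
          field_simp
      _ ≤ _ := mul_le_of_le_one_right (by positivity) h1
  rcases le_total 0 ζ with hz | hz
  · refine ⟨y ^ (-ζ), fun τ hτ => (key τ hτ).trans ?_⟩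
    have h1 : (τ + y) ^ (-ζ) ≤ y ^ (-ζ) :=
      Real.rpow_le_rpow_of_nonpos hy0 (by linarith) (by linarith)
    have h2 : 0 < τ ^ (-1 / 2 : ℝ) := by positivity
    have h3 : 0 < y ^ (-ζ) := by positivity
    nlinarith
  · refine ⟨1 + (1 + y) ^ (1 / 2 : ℝ), fun τ hτ => (key τ hτ).trans ?_⟩
    have h1 : (τ + y) ^ (-ζ) ≤ (τ + (1 + y)) ^ (1 / 2 : ℝ) :=
      (Real.rpow_le_rpow (by positivity) (by linarith) (by linarith)).trans
        (Real.rpow_le_rpow_of_exponent_le (by linarith) (by linarith))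
    have h2 : (τ + (1 + y)) ^ (1 / 2 : ℝ) ≤ τ ^ (1 / 2 : ℝ) + (1 + y) ^ (1 / 2 : ℝ) :=
      Real.rpow_add_le_add_rpow hτ.le (by positivity) (by norm_num) (by norm_num)
    have h3 : τ ^ (-1 / 2 : ℝ) * τ ^ (1 / 2 : ℝ) = 1 := by
      rw [← Real.rpow_add hτ]; norm_num
    have h4 : 0 < τ ^ (-1 / 2 : ℝ) := by positivity
    have h5 : 0 < (1 + y) ^ (1 / 2 : ℝ) := by positivity
    have h6 := mul_le_mul_of_nonneg_left (h1.trans h2) h4.le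
    nlinarith

section Subordinator

variable {α t : ℝ} {σ : ℝ → ℝ → ℝ}

lemma IsStableSubordinatorDensity.integrableOn_exp_mul (hσ : IsStableSubordinatorDensity α σ)
    (ht : 0 < t) {l : ℝ} (hl : 0 ≤ l) :
    IntegrableOn (fun τ => Real.exp (-τ * l) * σ t τ) (Ioi 0) := by
  by_contra h
  have h1 := hσ.2.2 t l ht hl
  rw [integral_undef h] at h1
  exact (Real.exp_pos _).ne h1

lemma IsStableSubordinatorDensity.integrableOn (hσ : IsStableSubordinatorDensity α σ)
    (ht : 0 < t) : IntegrableOn (σ t) (Ioi 0) := by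
  simpa using hσ.integrableOn_exp_mul ht le_rfl

lemma lintegral_rpow_mul_exp_neg {τ : ℝ} (hτ : 0 < τ) :
    ∫⁻ l in Ioi (0 : ℝ), ENNReal.ofReal (l ^ (-1 / 2 : ℝ) * Real.exp (-τ * l)) =
      ENNReal.ofReal (√Real.pi * τ ^ (-1 / 2 : ℝ)) := by
  have hi : IntegrableOn (fun l : ℝ => l ^ (-1 / 2 : ℝ) * Real.exp (-τ * l)) (Ioi 0) := by
    have := integrableOn_rpow_mul_exp_neg_mul_rpow (s := -1 / 2) (p := 1) (b := τ) (by norm_num)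
      one_pos hτ
    simpa only [Real.rpow_one] using this
  rw [← ofReal_integral_eq_lintegral_ofReal hi]
  · congr 1
    have := Real.integral_rpow_mul_exp_neg_mul_Ioi (a := 1 / 2) (r := τ) (by norm_num) hτ
    rw [Real.Gamma_one_half_eq, one_div τ, Real.inv_rpow hτ.le, ← Real.rpow_neg hτ.le] at this
    rw [show (1 : ℝ) / 2 - 1 = -1 / 2 by norm_num, show -((1 : ℝ) / 2) = -1 / 2 by norm_num] at this
    simp only [neg_mul]
    rw [this, mul_comm]
  · filter_upwards [ae_restrict_mem measurableSet_Ioi] with l hl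
    have : 0 < l := hl
    positivity

/-- The negative moment of order `-1/2` of a stable subordinator is finite. -/
lemma IsStableSubordinatorDensity.integrableOn_rpow_mul (hσ : IsStableSubordinatorDensity α σ)
    (hα : 0 < α) (ht : 0 < t) :
    IntegrableOn (fun τ => τ ^ (-1 / 2 : ℝ) * σ t τ) (Ioi 0) := by
  have hσm : Measurable (σ t) := hσ.2.1 t ht
  have hσn : ∀ τ, 0 < τ → 0 ≤ σ t τ := hσ.1 t ht
  have hpi : 0 < √Real.pi := Real.sqrt_pos.2 Real.pi_pos
  suffices h : IntegrableOn (fun τ => √Real.pi * τ ^ (-1 / 2 : ℝ) * σ t τ) (Ioi 0) by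
    refine (h.const_mul (√Real.pi)⁻¹).congr (Eventually.of_forall fun τ => ?_)
    field_simp
  have hm : Measurable fun τ => √Real.pi * τ ^ (-1 / 2 : ℝ) * σ t τ := by fun_prop
  refine ⟨hm.aestronglyMeasurable, ?_⟩
  rw [hasFiniteIntegral_iff_ofReal]
  swap
  · filter_upwards [ae_restrict_mem measurableSet_Ioi] with τ hτ
    have hτ : 0 < τ := hτ
    have := hσn τ hτ
    positivity
  have e1 : ∫⁻ τ in Ioi (0 : ℝ), ENNReal.ofReal (√Real.pi * τ ^ (-1 / 2 : ℝ) * σ t τ) =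
      ∫⁻ τ in Ioi (0 : ℝ), ∫⁻ l in Ioi (0 : ℝ),
        ENNReal.ofReal (l ^ (-1 / 2 : ℝ) * (Real.exp (-τ * l) * σ t τ)) := by
    refine setLIntegral_congr_fun measurableSet_Ioi fun τ hτ => ?_
    have hτ : 0 < τ := hτ
    rw [ENNReal.ofReal_mul (by positivity), ← lintegral_rpow_mul_exp_neg hτ,
      ← lintegral_mul_const _ (by fun_prop)]
    refine setLIntegral_congr_fun measurableSet_Ioi fun l hl => ?_
    have hl : 0 < l := hl
    rw [← ENNReal.ofReal_mul (by positivity), mul_assoc]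
  have e2 : ∀ l ∈ Ioi (0 : ℝ), ∫⁻ τ in Ioi (0 : ℝ),
        ENNReal.ofReal (l ^ (-1 / 2 : ℝ) * (Real.exp (-τ * l) * σ t τ)) =
      ENNReal.ofReal (l ^ (-1 / 2 : ℝ) * Real.exp (-t * l ^ (α / 2))) := fun l hl => by
    have hl : 0 < l := hl
    rw [← hσ.2.2 t l ht hl.le, ← integral_const_mul,
      ofReal_integral_eq_lintegral_ofReal ((hσ.integrableOn_exp_mul ht hl.le).const_mul _)]
    filter_upwards [ae_restrict_mem measurableSet_Ioi] with τ hτ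
    have := hσn τ hτ
    positivity
  have hm2 : Measurable fun p : ℝ × ℝ =>
      ENNReal.ofReal (p.2 ^ (-1 / 2 : ℝ) * (Real.exp (-p.1 * p.2) * σ t p.1)) := by
    have : Measurable fun p : ℝ × ℝ => σ t p.1 := hσm.comp measurable_fst
    fun_prop
  rw [e1, lintegral_lintegral_swap hm2.aemeasurable, setLIntegral_congr_fun measurableSet_Ioi e2]
  exact (integrableOn_rpow_mul_exp_neg_mul_rpow (by norm_num) (by positivity) ht).lintegral_lt_top

lemma IsStableSubordinatorDensity.integrableOn_besselHeat_mul
    (hσ : IsStableSubordinatorDensity α σ) (hα : 0 < α) (ht : 0 < t) {ζ r s : ℝ}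
    (hζ : -1 / 2 < ζ) (hr : 0 < r) (hs : 0 < s) :
    IntegrableOn (fun τ => besselHeat ζ τ r s * σ t τ) (Ioi 0) := by
  obtain ⟨m, M, hm, hM, h⟩ := exists_besselHeat_bounds hζ
  obtain ⟨C, hC⟩ := exists_heatProfile_le_one_add hζ hr hs
  have hi : IntegrableOn (fun τ => M * C * (σ t τ + τ ^ (-1 / 2 : ℝ) * σ t τ)) (Ioi 0) :=
    ((hσ.integrableOn ht).add (hσ.integrableOn_rpow_mul hα ht)).const_mul _
  refine Integrable.mono' hi ((aestronglyMeasurable_besselHeat hζ hr hs).mul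
    (hσ.2.1 t ht).aestronglyMeasurable) ?_
  filter_upwards [ae_restrict_mem measurableSet_Ioi] with τ hτ
  have hτ : 0 < τ := hτ
  obtain ⟨h1, h2⟩ := h τ r s hτ hr hs
  have h3 : 0 ≤ besselHeat ζ τ r s := (mul_nonneg hm.le (heatProfile_nonneg hτ hr hs)).trans h1
  have h4 := hσ.1 t ht τ hτ
  rw [Real.norm_of_nonneg (mul_nonneg h3 h4)]
  calc besselHeat ζ τ r s * σ t τ ≤ M * (C * (1 + τ ^ (-1 / 2 : ℝ))) * σ t τ := by
        refine mul_le_mul_of_nonneg_right (h2.trans ?_) h4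
        exact mul_le_mul_of_nonneg_left (hC τ hτ) hM.le
    _ = _ := by ring

end Subordinator

lemma exists_besselHeat_le {ζ : ℝ} (hζ : -1 / 2 < ζ) :
    ∃ K : ℝ, 0 < K ∧ ∀ τ r s z : ℝ, 0 < τ → 0 < r → 0 < s → 0 < z → |r - s| / 2 < |z - s| →
      besselHeat ζ τ z s ≤ K * besselHeat ζ τ (1 / 4 * r) (1 / 4 * s) := by
  obtain ⟨m, M, hm, hM, h⟩ := exists_besselHeat_bounds hζ
  obtain ⟨K, hK, hKb⟩ := exists_heatProfile_le ζ
  refine ⟨M * K / m, by positivity, fun τ r s z hτ hr hs hz hlt => ?_⟩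
  calc besselHeat ζ τ z s ≤ M * heatProfile ζ τ z s := (h τ z s hτ hz hs).2
    _ ≤ M * (K * heatProfile ζ τ (1 / 4 * r) (1 / 4 * s)) :=
      mul_le_mul_of_nonneg_left (hKb τ r s z hτ hr hs hz hlt) hM.le
    _ = M * K / m * (m * heatProfile ζ τ (1 / 4 * r) (1 / 4 * s)) := by field_simp
    _ ≤ _ := mul_le_mul_of_nonneg_left
      (h τ (1 / 4 * r) (1 / 4 * s) hτ (by positivity) (by positivity)).1 (by positivity)

theorem stmt19 (ζ α : ℝ) (hζ : -1/2 < ζ) (hα0 : 0 < α) (hα2 : α ≤ 2)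
    (p : ℝ → ℝ → ℝ → ℝ) (hp : IsSubordinatedBesselKernel ζ α p) :
    ∃ c K : ℝ, 0 < c ∧ 0 < K ∧
      ∀ r s z t : ℝ, 0 < r → 0 < s → 0 < z → 0 < t → |z - s| > |r - s| / 2 →
        p t z s ≤ K * p t (c * r) (c * s) := by
  obtain ⟨K, hK, hKb⟩ := exists_besselHeat_le hζ
  refine ⟨1 / 4, K, by norm_num, hK, fun r s z t hr hs hz ht hlt => ?_⟩
  rcases hp with ⟨-, hp⟩ | ⟨-, σ, hσ, hp⟩
  · rw [hp, hp]
    exact hKb t r s z ht hr hs hz hlt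
  · rw [hp, hp, subKernel, subKernel, ← integral_const_mul]
    refine setIntegral_mono_on (hσ.integrableOn_besselHeat_mul hα0 ht hζ hz hs)
      ((hσ.integrableOn_besselHeat_mul hα0 ht hζ (by positivity) (by positivity)).const_mul K)
      measurableSet_Ioi fun τ hτ => ?_
    rw [← mul_assoc]
    exact mul_le_mul_of_nonneg_right (hKb τ r s z hτ hr hs hz hlt) (hσ.1 t ht τ hτ)
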